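/- Let P be a terminal simplicial reflexive d-polytope and F a facet of P such that there are exactly d vertices of P in the hyperplane H(F,0) = {x | ⟨u_F, x⟩ = 0}. Then the vertex set V(F) is a basis of the lattice N. -/

import Mathlib

/-!
The vertices `b₁, …, b_d` of `F` form a basis of `ℝ^d` with coordinate functionals `cᵢ`, and
`u_F = ∑ cᵢ`. Each ridge `F \ {bᵢ}` lies on a second facet `Fᵢ`, whose functional has the form
`u_F - tᵢ cᵢ` with `tᵢ > 0` (`exists_neighbor`); reflexivity makes this functional integral, so
`tᵢ` is a positive integer.

Let `x` be a vertex with `u_F(x) = 0`. Some coordinate `cᵢ x` is negative, and then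
`u_{Fᵢ}(x) = -tᵢ cᵢ(x)` is a positive integer that is at most `1`, so `x ∈ Fᵢ`. As `P` is simplicial,
`Fᵢ` has room for only one vertex outside `F`, so `x ↦ i` is injective. If there are `d` such
vertices `x`, it is a bijection: every `i` has its own `xᵢ`, with `cᵢ(xᵢ) = -1/tᵢ` and all
other coordinates nonnegative. Then `bᵢ + xᵢ` has coordinates that are nonnegative with sum `1`,
so it is a lattice point of `F`; by terminality it is a vertex of `F`, so its
`i`-th coordinate `1 - 1/tᵢ` is `0` or `1`, which forces `tᵢ = 1`. Hence `cᵢ = u_F - u_{Fᵢ}` is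
integral for every `i`, which says that the `bᵢ` generate the lattice.
-/


open Finset

/-- A point of `ℝ^d` is a lattice point if all of its coordinates are integers. -/
def IsLatticePt {d : ℕ} (x : Fin d → ℝ) : Prop := ∀ i, ∃ z : ℤ, x i = (z : ℝ)

/-- The pairing between `M_ℝ` and `N_ℝ`, both identified with `ℝ^d`. -/
noncomputable def pairing {d : ℕ} (u x : Fin d → ℝ) : ℝ := ∑ i, u i * x i

/-- The `i`-th standard basis vector of `ℝ^d`. -/
noncomputable def stdVec {d : ℕ} (i : Fin d) : Fin d → ℝ := Pi.single i 1

/-- A polytope in `ℝ^d`, given by its finite vertex set (each listed point is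
required to be an extreme point of the convex hull, i.e. a genuine vertex). -/
structure Polytope (d : ℕ) where
  verts : Finset (Fin d → ℝ)
  vertsExtreme : ∀ v ∈ verts,
    v ∈ Set.extremePoints ℝ (convexHull ℝ (verts : Set (Fin d → ℝ)))

namespace Polytope

variable {d : ℕ}

/-- The polytope as a subset of `ℝ^d`. -/
def carrier (P : Polytope d) : Set (Fin d → ℝ) :=
  convexHull ℝ (P.verts : Set (Fin d → ℝ))

/-- A proper face of `P`, cut out by a supporting hyperplane. -/
def IsFace (P : Polytope d) (F : Set (Fin d → ℝ)) : Prop :=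
  ∃ u : Fin d → ℝ, u ≠ 0 ∧ ∃ c : ℝ,
    (∀ x ∈ P.carrier, pairing u x ≤ c) ∧ F = {x ∈ P.carrier | pairing u x = c}

/-- A facet of `P`: a nonempty proper face of dimension `d - 1`. -/
def IsFacet (P : Polytope d) (F : Set (Fin d → ℝ)) : Prop :=
  P.IsFace F ∧ F.Nonempty ∧ Module.finrank ℝ (vectorSpan ℝ F) = d - 1

/-- The set of vertices of `P` lying on `F`. -/
def vertsOn (P : Polytope d) (F : Set (Fin d → ℝ)) : Set (Fin d → ℝ) :=
  {v | v ∈ P.verts ∧ v ∈ F}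

/-- `P` is simplicial if every facet has exactly `d` vertices. -/
def IsSimplicial (P : Polytope d) : Prop :=
  ∀ F, P.IsFacet F → (P.vertsOn F).ncard = d

/-- `P` is a lattice polytope. -/
def IsLattice (P : Polytope d) : Prop := ∀ v ∈ P.verts, IsLatticePt v

/-- `u` is the supporting functional `u_F` of the facet `F`, i.e. `⟨u, ·⟩ = 1` on `F`. -/
def IsUF (P : Polytope d) (F : Set (Fin d → ℝ)) (u : Fin d → ℝ) : Prop :=
  ∀ x ∈ F, pairing u x = 1

/-- `u` is the dual basis element `u_F^v`: it takes value `1` at the vertex `v` of `F`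
and `0` at all other vertices of `F`. -/
def IsDualBasisElt (P : Polytope d) (F : Set (Fin d → ℝ)) (v : Fin d → ℝ)
    (u : Fin d → ℝ) : Prop :=
  pairing u v = 1 ∧ ∀ w ∈ P.vertsOn F, w ≠ v → pairing u w = 0

/-- `P` is reflexive: it is a lattice polytope with `0` in its interior, and every
facet lies on a hyperplane `⟨u, ·⟩ = 1` with `u` integral (equivalently, the dual
polytope is a lattice polytope). -/
def IsReflexive (P : Polytope d) : Prop :=
  P.IsLattice ∧ 0 ∈ interior P.carrier ∧
    ∀ F, P.IsFacet F → ∃ u : Fin d → ℤ, P.IsUF F (fun i => (u i : ℝ))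

/-- `P` is terminal: the only lattice points of `P` are its vertices and the origin. -/
def IsTerminal (P : Polytope d) : Prop :=
  ∀ x ∈ P.carrier, IsLatticePt x → x = 0 ∨ x ∈ P.verts

/-- `F'` is the neighboring facet `N(F, v)`: the facet different from `F` containing
all vertices of `F` except `v`. -/
def IsNeighborFacet (P : Polytope d) (F : Set (Fin d → ℝ)) (v : Fin d → ℝ)
    (F' : Set (Fin d → ℝ)) : Prop :=
  P.IsFacet F' ∧ F' ≠ F ∧ ∀ w ∈ P.vertsOn F, w ≠ v → w ∈ F'

/-- `y` is the neighboring vertex `n(F, v)`: the unique vertex of `N(F, v)` not on `F`. -/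
def IsNeighborVertex (P : Polytope d) (F : Set (Fin d → ℝ)) (v : Fin d → ℝ)
    (y : Fin d → ℝ) : Prop :=
  ∃ F', P.IsNeighborFacet F v F' ∧ y ∈ P.vertsOn F' ∧ y ∉ F

/-- `F` is a special facet of `P`: the sum of all vertices of `P` is a nonnegative
linear combination of the vertices of `F`, i.e. `⟨u_F^w, ν_P⟩ ≥ 0` for every vertex
`w` of `F`. -/
def IsSpecialFacet (P : Polytope d) (F : Set (Fin d → ℝ)) : Prop :=
  P.IsFacet F ∧ ∀ w ∈ P.vertsOn F, ∀ uFw : Fin d → ℝ,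
    P.IsDualBasisElt F w uFw → 0 ≤ pairing uFw (∑ v ∈ P.verts, v)

end Polytope

/-- `S` is a `ℤ`-basis of the lattice `ℤ^d ⊆ ℝ^d`. -/
def IsLatticeBasis {d : ℕ} (S : Set (Fin d → ℝ)) : Prop :=
  ∃ v : Fin d → (Fin d → ℝ), Set.range v = S ∧
    ∀ x : Fin d → ℝ, (IsLatticePt x ↔ ∃ a : Fin d → ℤ, x = ∑ i, (a i : ℝ) • v i)

/-! ### Pairings and lattice points -/

section Pairing

variable {d : ℕ}

lemma pairing_add_right (u x y : Fin d → ℝ) : pairing u (x + y) = pairing u x + pairing u y :=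
  dotProduct_add u x y

lemma pairing_smul_right (u x : Fin d → ℝ) (a : ℝ) : pairing u (a • x) = a * pairing u x :=
  dotProduct_smul a u x

/-- The linear functional `⟨u, ·⟩`. -/
noncomputable def pairingL (u : Fin d → ℝ) : (Fin d → ℝ) →ₗ[ℝ] ℝ where
  toFun := pairing u
  map_add' := pairing_add_right u
  map_smul' a x := pairing_smul_right u x a

lemma pairingL_apply (u x : Fin d → ℝ) : pairingL u x = pairing u x := rfl

lemma exists_pairing_eq (f : (Fin d → ℝ) →ₗ[ℝ] ℝ) : ∃ u : Fin d → ℝ, ∀ x, pairing u x = f x := by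
  refine ⟨fun i => f (Pi.single i 1), fun x => ?_⟩
  have h : pairingL (fun i => f (Pi.single i 1)) = f := by
    refine (Pi.basisFun ℝ (Fin d)).ext fun i => ?_
    simp [pairingL_apply, pairing, Pi.single_apply]
  exact LinearMap.congr_fun h x

lemma pairing_int {u : Fin d → ℤ} {x : Fin d → ℝ} (hx : IsLatticePt x) :
    ∃ z : ℤ, pairing (fun i => (u i : ℝ)) x = z := by
  choose z hz using hx
  exact ⟨∑ i, u i * z i, by simp [pairing, hz]⟩

end Pairing

lemma IsLatticePt.add {d : ℕ} {x y : Fin d → ℝ} (hx : IsLatticePt x) (hy : IsLatticePt y) :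
    IsLatticePt (x + y) := fun i => by
  obtain ⟨a, ha⟩ := hx i
  obtain ⟨c, hc⟩ := hy i
  exact ⟨a + c, by simp [ha, hc]⟩

lemma exists_smul_mem {d : ℕ} {C : Set (Fin d → ℝ)} (h0 : 0 ∈ interior C) (x : Fin d → ℝ) :
    ∃ ε : ℝ, 0 < ε ∧ ε • x ∈ C := by
  have hc : Filter.Tendsto (fun t : ℝ => t • x) (nhds 0) (nhds 0) := by
    have : Continuous fun t : ℝ => t • x := by fun_prop
    simpa using this.tendsto 0
  have h1 : ∀ᶠ t : ℝ in nhdsWithin 0 (Set.Ioi 0), t • x ∈ C :=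
    (hc.mono_left nhdsWithin_le_nhds).eventually (mem_interior_iff_mem_nhds.1 h0)
  obtain ⟨t, ht, ht'⟩ := (h1.and self_mem_nhdsWithin).exists
  exact ⟨t, ht', ht⟩

lemma finrank_vectorSpan_le {d : ℕ} {S : Set (Fin d → ℝ)} {u : Fin d → ℝ} (hu : u ≠ 0) {c : ℝ}
    (hS : ∀ x ∈ S, pairing u x = c) : Module.finrank ℝ (vectorSpan ℝ S) ≤ d - 1 := by
  have hle : vectorSpan ℝ S ≤ LinearMap.ker (pairingL u) := by
    rw [vectorSpan_def, Submodule.span_le]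
    rintro _ ⟨x, hx, y, hy, rfl⟩
    change pairingL u (x - y) = 0
    rw [map_sub, pairingL_apply, pairingL_apply, hS x hx, hS y hy, sub_self]
  have hne : LinearMap.ker (pairingL u) ≠ ⊤ := by
    intro h
    have h2 : pairingL u u = 0 := LinearMap.mem_ker.1 (h ▸ Submodule.mem_top)
    exact hu (dotProduct_self_eq_zero.1 h2)
  have h1 := Submodule.finrank_mono hle
  have h2 := Submodule.finrank_lt hne
  rw [Module.finrank_fin_fun] at h2
  omega

/-! ### Facets of simplicial polytopes -/

namespace Polytope

variable {d : ℕ} (P : Polytope d)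

lemma pairing_le_of_verts {u : Fin d → ℝ} {c : ℝ} (h : ∀ v ∈ P.verts, pairing u v ≤ c)
    {x : Fin d → ℝ} (hx : x ∈ P.carrier) : pairing u x ≤ c :=
  convexHull_min (t := {x | pairingL u x ≤ c}) h
    (convex_halfSpace_le (pairingL u).isLinear c) hx

lemma verts_subset {v : Fin d → ℝ} (hv : v ∈ P.verts) : v ∈ P.carrier :=
  subset_convexHull ℝ _ hv

/-- A face is contained in the convex hull of the vertices on it. -/
lemma face_subset {u : Fin d → ℝ} {c : ℝ} (hle : ∀ x ∈ P.carrier, pairing u x ≤ c) :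
    {x ∈ P.carrier | pairing u x = c} ⊆
      convexHull ℝ (P.vertsOn {x ∈ P.carrier | pairing u x = c}) := by
  rintro x ⟨hx, hux⟩
  obtain ⟨w, hw0, hw1, hwx⟩ := Finset.mem_convexHull'.1 hx
  -- the weighted slacks `w v * (c - ⟨u, v⟩)` are nonnegative and sum to zero
  have hs : ∑ v ∈ P.verts, w v * (c - pairing u v) = 0 := by
    have : pairing u x = ∑ v ∈ P.verts, w v * pairing u v := by
      rw [← hwx, ← pairingL_apply, map_sum]
      simp [pairingL_apply]
    simp only [mul_sub, Finset.sum_sub_distrib, ← Finset.sum_mul, hw1, ← this, hux]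
    ring
  rw [Finset.sum_eq_zero_iff_of_nonneg fun v hv =>
    mul_nonneg (hw0 v hv) (sub_nonneg.2 (hle v (P.verts_subset hv)))] at hs
  have hz : ∀ v ∈ P.verts, w v ≠ 0 → pairing u v = c := fun v hv h => by
    have := (mul_eq_zero.1 (hs v hv)).resolve_left h
    linarith
  rw [← hwx, ← Finset.sum_filter_of_ne (p := fun v => w v ≠ 0)
    (fun v _ h h' => h (by simp [h']))]
  refine (convex_convexHull ℝ _).sum_mem (fun v hv => hw0 v (Finset.mem_filter.1 hv).1) ?_ ?_
  · rw [Finset.sum_filter_ne_zero, hw1]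
  · intro v hv
    obtain ⟨hv, h⟩ := Finset.mem_filter.1 hv
    exact subset_convexHull ℝ _ ⟨hv, P.verts_subset hv, hz v hv h⟩

/-- The vertices of a facet with `d` vertices form a vector space basis, and the functional that
is `1` on the facet defines it as a face. -/
lemma exists_facet_basis (h0 : 0 ∈ interior P.carrier) {F : Set (Fin d → ℝ)} (hF : P.IsFacet F)
    (hcard : (P.vertsOn F).ncard = d) :
    ∃ b : Module.Basis (Fin d) ℝ (Fin d → ℝ), Set.range b = P.vertsOn F ∧
      ∀ u, P.IsUF F u → (∀ x ∈ P.carrier, pairing u x ≤ 1) ∧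
        ∀ x ∈ P.carrier, pairing u x = 1 → x ∈ F := by
  obtain ⟨⟨u, hu, c, hle, hFeq⟩, -, hfr⟩ := hF
  have hd : d ≠ 0 := by
    rintro rfl
    exact hu (Subsingleton.elim _ _)
  have hc : 0 < c := by
    obtain ⟨ε, hε, hm⟩ := exists_smul_mem h0 u
    have h1 := hle _ hm
    rw [pairing_smul_right] at h1
    have h2 : 0 < pairing u u :=
      lt_of_le_of_ne (Finset.sum_nonneg fun i _ => mul_self_nonneg _)
        fun h => hu (dotProduct_self_eq_zero.1 h.symm)
    exact lt_of_lt_of_le (mul_pos hε h2) h1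
  have huc : ∀ v ∈ P.vertsOn F, pairing u v = c := by
    rintro v ⟨-, hv⟩
    rw [hFeq] at hv
    exact hv.2
  have hfin : (P.vertsOn F).Finite := P.verts.finite_toSet.subset fun v hv => hv.1
  have : Fintype (P.vertsOn F) := hfin.fintype
  have hcard' : Fintype.card (P.vertsOn F) = d := by
    rw [← Nat.card_eq_fintype_card]
    exact hcard
  let e := (Fintype.equivFinOfCardEq hcard').symm
  let p : Fin d → (Fin d → ℝ) := fun i => e i
  have hp : Set.range p = P.vertsOn F := by
    have : p = Subtype.val ∘ e := rfl
    rw [this, Set.range_comp, e.surjective.range_eq, Set.image_univ, Subtype.range_coe]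
  have hspan : vectorSpan ℝ (Set.range p) = vectorSpan ℝ F := by
    rw [hp]
    refine le_antisymm (vectorSpan_mono ℝ fun v hv => hv.2) ?_
    rw [← direction_affineSpan ℝ (P.vertsOn F), ← affineSpan_convexHull, direction_affineSpan]
    refine vectorSpan_mono ℝ ?_
    rw [hFeq]
    exact P.face_subset hle
  have haff : AffineIndependent ℝ p := by
    rw [affineIndependent_iff_finrank_vectorSpan_eq (n := d - 1) ℝ p (by simp; omega), hspan, hfr]
  have hlin : LinearIndependent ℝ p := by
    rw [Fintype.linearIndependent_iff]
    intro g hg i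
    refine affineIndependent_iff.1 haff Finset.univ g ?_ hg i (Finset.mem_univ i)
    have h1 : ∑ j, g j * c = 0 := by
      have h2 := congrArg (pairingL u) hg
      rw [map_sum, map_zero] at h2
      rw [← h2]
      refine Finset.sum_congr rfl fun j _ => ?_
      rw [map_smul, pairingL_apply, huc (p j) (hp ▸ Set.mem_range_self j), smul_eq_mul]
    rw [← Finset.sum_mul] at h1
    exact (mul_eq_zero.1 h1).resolve_right hc.ne'
  have : Nonempty (Fin d) := ⟨⟨0, by omega⟩⟩
  let b := basisOfLinearIndependentOfCardEqFinrank hlin (by simp)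
  have hb : ⇑b = p := coe_basisOfLinearIndependentOfCardEqFinrank hlin (by simp)
  refine ⟨b, by rw [hb, hp], fun u' hu' => ?_⟩
  have heq : pairingL u = c • pairingL u' := by
    refine b.ext fun i => ?_
    have hi : b i ∈ P.vertsOn F := by
      rw [hb, ← hp]
      exact Set.mem_range_self i
    simp [pairingL_apply, huc _ hi, hu' _ hi.2]
  have heq' : ∀ x, pairing u x = c * pairing u' x := fun x => by
    simpa [pairingL_apply] using LinearMap.congr_fun heq x
  refine ⟨fun x hx => ?_, fun x hx h => ?_⟩
  · have := hle x hx
    rw [heq'] at this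
    nlinarith
  · rw [hFeq]
    exact ⟨hx, by rw [heq', h, mul_one]⟩

lemma zero_notMem_verts (hd : d ≠ 0) (h0 : 0 ∈ interior P.carrier) : (0 : Fin d → ℝ) ∉ P.verts := by
  intro h
  let e : Fin d → ℝ := fun _ => 1
  obtain ⟨ε, hε, h1⟩ := exists_smul_mem h0 e
  obtain ⟨δ, hδ, h2⟩ := exists_smul_mem h0 (-e)
  have h3 := ((mem_extremePoints.1 (P.vertsExtreme _ h)).2 _ h1 _ h2
    ⟨δ / (ε + δ), ε / (ε + δ), by positivity, by positivity, by field_simp; ring, by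
      simp only [smul_smul, smul_neg]
      rw [div_mul_eq_mul_div, div_mul_eq_mul_div, mul_comm δ ε, add_neg_cancel]⟩).1
  have h4 := congrFun h3 ⟨0, by omega⟩
  simp [e] at h4
  exact hε.ne' h4

/-- The neighbouring facet across the ridge opposite to the vertex `b i` of a facet, obtained by
tilting the supporting functional `u` in the direction of the `i`-th coordinate functional until the
supporting hyperplane meets a new vertex. -/
lemma exists_neighbor (h0 : 0 ∈ interior P.carrier) {F : Set (Fin d → ℝ)}
    (b : Module.Basis (Fin d) ℝ (Fin d → ℝ)) (hb : Set.range b = P.vertsOn F)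
    {u : Fin d → ℝ} (hu : P.IsUF F u) (hu1 : ∀ x ∈ P.carrier, pairing u x ≤ 1)
    (hu2 : ∀ x ∈ P.carrier, pairing u x = 1 → x ∈ F) (i : Fin d) :
    ∃ (t : ℝ) (u' : Fin d → ℝ), 0 < t ∧ (∀ x, pairing u' x = pairing u x - t * b.coord i x) ∧
      (∀ x ∈ P.carrier, pairing u' x ≤ 1) ∧
      P.IsFacet {x ∈ P.carrier | pairing u' x = 1} := by
  have hbF : ∀ j, b j ∈ P.vertsOn F := fun j => hb ▸ Set.mem_range_self j
  let S := P.verts.filter fun x => b.coord i x < 0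
  have hS : S.Nonempty := by
    rw [Finset.filter_nonempty_iff]
    by_contra! hcon
    obtain ⟨w, hw⟩ := exists_pairing_eq (-b.coord i)
    obtain ⟨ε, hε, hm⟩ := exists_smul_mem h0 (-b i)
    have h1 := P.pairing_le_of_verts (u := w) (c := 0)
      (fun v hv => by rw [hw]; simpa using hcon v hv) hm
    rw [hw] at h1
    simp at h1
    linarith
  -- `(1 - ⟨u, x⟩) / (-cᵢ x)` is the time at which the tilting hyperplane meets `x`
  obtain ⟨y, hyS, hmin⟩ :=
    S.exists_min_image (fun x => (1 - pairing u x) / (-b.coord i x)) hS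
  obtain ⟨hyV, hyneg⟩ := Finset.mem_filter.1 hyS
  have hy1 : pairing u y < 1 := by
    refine lt_of_le_of_ne (hu1 y (P.verts_subset hyV)) fun h => ?_
    have hyF : y ∈ P.vertsOn F := ⟨hyV, hu2 y (P.verts_subset hyV) h⟩
    rw [← hb] at hyF
    obtain ⟨j, rfl⟩ := hyF
    rw [Module.Basis.coord_apply, Module.Basis.repr_self, Finsupp.single_apply] at hyneg
    split_ifs at hyneg <;> linarith
  set t := (1 - pairing u y) / (-b.coord i y) with ht
  have htpos : 0 < t := div_pos (by linarith) (by linarith)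
  obtain ⟨u', hu'⟩ := exists_pairing_eq (pairingL u - t • b.coord i)
  have hu'x : ∀ x, pairing u' x = pairing u x - t * b.coord i x := fun x => by
    rw [hu']
    rfl
  have hle : ∀ x ∈ P.carrier, pairing u' x ≤ 1 := fun x hx => by
    refine P.pairing_le_of_verts (fun v hv => ?_) hx
    have h1 := hu1 v (P.verts_subset hv)
    rw [hu'x]
    by_cases hneg : b.coord i v < 0
    · have h2 := hmin v (Finset.mem_filter.2 ⟨hv, hneg⟩)
      rw [le_div_iff₀ (by linarith)] at h2
      linarith
    · nlinarith
  have huy : pairing u' y = 1 := by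
    rw [hu'x]
    have : t * (-b.coord i y) = 1 - pairing u y := div_mul_cancel₀ _ (by linarith)
    linarith
  have hne : u' ≠ 0 := by
    rintro rfl
    simp [pairing] at huy
  refine ⟨t, u', htpos, hu'x, hle, ⟨u', hne, 1, hle, rfl⟩, ⟨y, P.verts_subset hyV, huy⟩, ?_⟩
  refine le_antisymm (finrank_vectorSpan_le hne fun x hx => hx.2) ?_
  have hlin : LinearIndependent ℝ (Function.update b i y) := by
    refine b.linearIndependent.update i y ⟨1, one_mem _, b.repr y, ?_, ?_⟩
    · rw [mem_nonZeroDivisors_iff_ne_zero]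
      exact hyneg.ne
    · rw [one_smul, b.linearCombination_repr]
  have hdpos : 0 < d := i.pos
  rw [← hlin.affineIndependent.finrank_vectorSpan (n := d - 1) (by simp; omega)]
  refine Submodule.finrank_mono (vectorSpan_mono ℝ ?_)
  rintro _ ⟨j, rfl⟩
  by_cases hj : j = i
  · subst hj
    simpa using ⟨P.verts_subset hyV, huy⟩
  · rw [Function.update_of_ne hj]
    refine ⟨P.verts_subset (hbF j).1, ?_⟩
    rw [hu'x, hu _ (hbF j).2, Module.Basis.coord_apply, Module.Basis.repr_self,
      Finsupp.single_eq_of_ne (Ne.symm hj)]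
    simp

/-- In a reflexive simplicial polytope, the supporting functional of a facet takes integral values
at lattice points. -/
lemma uF_int (hrefl : P.IsReflexive) (hsimp : P.IsSimplicial) {F : Set (Fin d → ℝ)}
    (hF : P.IsFacet F) {u : Fin d → ℝ} (hu : P.IsUF F u) {x : Fin d → ℝ} (hx : IsLatticePt x) :
    ∃ z : ℤ, pairing u x = z := by
  obtain ⟨u', hu'⟩ := hrefl.2.2 F hF
  obtain ⟨b, hb, -⟩ := P.exists_facet_basis hrefl.2.1 hF (hsimp F hF)
  have heq : pairingL u = pairingL (fun i => (u' i : ℝ)) := by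
    refine b.ext fun i => ?_
    have hi : b i ∈ P.vertsOn F := hb ▸ Set.mem_range_self i
    rw [pairingL_apply, pairingL_apply, hu _ hi.2, hu' _ hi.2]
  rw [← pairingL_apply, heq]
  exact pairing_int hx

/-- A face `F'` with `d` vertices that contains all vertices `b j`, `j ≠ i`, has at most one
vertex off the facet `F` whose vertices are the `b j`. -/
lemma eq_of_mem_neighbor {F F' : Set (Fin d → ℝ)} (b : Module.Basis (Fin d) ℝ (Fin d → ℝ))
    (hb : Set.range b = P.vertsOn F) (i : Fin d) (hcard : (P.vertsOn F').ncard = d)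
    (hbF' : ∀ j, j ≠ i → b j ∈ P.vertsOn F') {x y : Fin d → ℝ} (hx : x ∈ P.vertsOn F')
    (hy : y ∈ P.vertsOn F') (hxF : x ∉ F) (hyF : y ∉ F) : x = y := by
  by_contra hne
  have hbF : ∀ j, b j ∈ P.vertsOn F := fun j => hb ▸ Set.mem_range_self j
  have hfin : (P.vertsOn F').Finite := P.verts.finite_toSet.subset fun v hv => hv.1
  have hsub : insert x (insert y (b '' {i}ᶜ)) ⊆ P.vertsOn F' := by
    rintro z (rfl | rfl | ⟨j, hj, rfl⟩)
    exacts [hx, hy, hbF' j hj]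
  have h1 := Set.ncard_le_ncard hsub hfin
  have hy' : y ∉ b '' {i}ᶜ := by
    rintro ⟨j, -, rfl⟩
    exact hyF (hbF j).2
  have hx' : x ∉ insert y (b '' {i}ᶜ) := by
    rintro (h | ⟨j, -, rfl⟩)
    exacts [hne h, hxF (hbF j).2]
  rw [Set.ncard_insert_of_notMem hx', Set.ncard_insert_of_notMem hy',
    Set.ncard_image_of_injective _ b.injective, Set.ncard_compl, Set.ncard_singleton,
    Nat.card_eq_fintype_card, Fintype.card_fin, hcard] at h1
  have := i.pos
  omega

end Polytope

/-! ### The lattice basis -/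

/-- A vector space basis of lattice points with integral coordinate functionals is a lattice
basis. -/
lemma isLatticeBasis_of_coord_int {d : ℕ} (b : Module.Basis (Fin d) ℝ (Fin d → ℝ))
    (hb : ∀ i, IsLatticePt (b i))
    (h : ∀ i x, IsLatticePt x → ∃ z : ℤ, b.coord i x = z) : IsLatticeBasis (Set.range b) := by
  refine ⟨b, rfl, fun x => ⟨fun hx => ?_, ?_⟩⟩
  · choose a ha using fun i => h i x hx
    refine ⟨a, ?_⟩
    conv_lhs => rw [← b.sum_repr x]
    exact Finset.sum_congr rfl fun i _ => by rw [← ha i, b.coord_apply]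
  · rintro ⟨a, rfl⟩ j
    choose z hz using hb
    exact ⟨∑ i, a i * z i j, by simp [Finset.sum_apply, hz]⟩

/-- Lemma (`lemh02`), second part: if a facet `F` of a terminal simplicial reflexive
`d`-polytope has exactly `d` vertices of `P` in `H(F, 0)`, then `V(F)` is a basis of
the lattice. -/
theorem vertsOn_facet_basis_of_d_on_H0 {d : ℕ} (P : Polytope d)
    (hrefl : P.IsReflexive) (hsimp : P.IsSimplicial) (hterm : P.IsTerminal)
    (F : Set (Fin d → ℝ)) (hF : P.IsFacet F)
    (uF : Fin d → ℝ) (huF : P.IsUF F uF)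
    (hd : {x | x ∈ P.verts ∧ pairing uF x = 0}.ncard = d) :
    IsLatticeBasis (P.vertsOn F) := by
  have h0 := hrefl.2.1
  have hdne : d ≠ 0 := by
    rintro rfl
    obtain ⟨⟨u, hu, -⟩, -⟩ := hF
    exact hu (Subsingleton.elim _ _)
  obtain ⟨b, hb, hprop⟩ := P.exists_facet_basis h0 hF (hsimp F hF)
  obtain ⟨hu1, hu2⟩ := hprop uF huF
  have hbF : ∀ j, b j ∈ P.vertsOn F := fun j => hb ▸ Set.mem_range_self j
  have hcb : ∀ i j, b.coord i (b j) = if j = i then 1 else 0 := fun i j => by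
    rw [b.coord_apply, b.repr_self, Finsupp.single_apply]
  have hsum : ∀ x, pairing uF x = ∑ i, b.coord i x := fun x => by
    conv_lhs => rw [← b.sum_repr x, ← pairingL_apply, map_sum]
    refine Finset.sum_congr rfl fun i _ => ?_
    rw [map_smul, pairingL_apply, huF _ (hbF i).2, b.coord_apply, smul_eq_mul, mul_one]
  choose t u' htpos hu' hle' hfacet using P.exists_neighbor h0 b hb huF hu1 hu2
  have hint' : ∀ i x, IsLatticePt x → ∃ z : ℤ, pairing (u' i) x = z := fun i x hx =>
    P.uF_int hrefl hsimp (hfacet i) (fun y hy => hy.2) hx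
  set H : Set (Fin d → ℝ) := {x | x ∈ P.verts ∧ pairing uF x = 0} with hH
  have hnotF : ∀ x ∈ H, x ∉ F := fun x hx hxF => by
    have h1 := huF x hxF
    rw [hx.2] at h1
    exact zero_ne_one h1
  have hmem : ∀ x ∈ H, ∀ i, b.coord i x < 0 →
      x ∈ P.vertsOn {x ∈ P.carrier | pairing (u' i) x = 1} := fun x hx i hneg => by
    refine ⟨hx.1, P.verts_subset hx.1, ?_⟩
    obtain ⟨z, hz⟩ := hint' i x (hrefl.1 x hx.1)
    have h1 := hle' i x (P.verts_subset hx.1)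
    have h2 : 0 < pairing (u' i) x := by
      rw [hu', hx.2]
      nlinarith [htpos i]
    rw [hz] at h1 h2 ⊢
    have h3 : z ≤ 1 := by exact_mod_cast h1
    have h4 : 0 < z := by exact_mod_cast h2
    have h5 : z = 1 := by omega
    rw [h5, Int.cast_one]
  have huniq : ∀ i, ∀ x ∈ H, ∀ y ∈ H, b.coord i x < 0 → b.coord i y < 0 → x = y :=
    fun i x hx y hy hxn hyn =>
      P.eq_of_mem_neighbor b hb i (hsimp _ (hfacet i))
        (fun j hj => ⟨(hbF j).1, P.verts_subset (hbF j).1, by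
          rw [hu', huF _ (hbF j).2, hcb, if_neg hj, mul_zero, sub_zero]⟩)
        (hmem x hx i hxn) (hmem y hy i hyn) (hnotF x hx) (hnotF y hy)
  have hexneg : ∀ x : H, ∃ i, b.coord i x < 0 := fun ⟨x, hx⟩ => by
    by_contra! hcon
    have h1 := hx.2
    rw [hsum, Finset.sum_eq_zero_iff_of_nonneg fun i _ => hcon i] at h1
    have h2 : x = 0 := by
      refine b.ext_elem fun i => ?_
      simpa using h1 i (Finset.mem_univ i)
    exact P.zero_notMem_verts hdne h0 (h2 ▸ hx.1)
  choose f hf using hexneg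
  have hfinj : Function.Injective f := fun x y hxy =>
    Subtype.ext (huniq (f x) x x.2 y y.2 (hf x) (hxy ▸ hf y))
  have hcardH : Nat.card (Fin d) ≤ Nat.card H := by
    rw [Nat.card_eq_fintype_card, Fintype.card_fin]
    exact hd.ge
  have hfsurj := (hfinj.bijective_of_nat_card_le hcardH).2
  have ht1 : ∀ i, t i = 1 := fun i => by
    obtain ⟨x, rfl⟩ := hfsurj i
    set i := f x with hi
    have hneg := hf x
    have hnonneg : ∀ j, j ≠ i → 0 ≤ b.coord j x := fun j hj => by
      by_contra! hcon
      obtain ⟨y, rfl⟩ := hfsurj j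
      exact hj (by rw [hi, Subtype.ext (huniq (f y) x x.2 y y.2 hcon (hf y))])
    have hxi : t i * b.coord i x = -1 := by
      have h1 := (hmem x x.2 i hneg).2.2
      rw [hu', x.2.2] at h1
      linarith
    have htge : 1 ≤ t i := by
      obtain ⟨z, hz⟩ := hint' i (b i) (hrefl.1 _ (hbF i).1)
      rw [hu', huF _ (hbF i).2, hcb, if_pos rfl] at hz
      have h1 : (z : ℝ) < 1 := by linarith [htpos i]
      have h2 : z < 1 := by exact_mod_cast h1
      have h3 : z ≤ 0 := by omega
      have h4 : (z : ℝ) ≤ 0 := by exact_mod_cast h3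
      linarith
    have hxge : -1 ≤ b.coord i x := by nlinarith
    -- `b i + x` is a convex combination of the vertices of `F`
    have hcoord : ∀ j, b.coord j (b i + x) = (if i = j then 1 else 0) + b.coord j x := fun j => by
      rw [map_add, hcb]
    have hone : pairing uF (b i + x) = 1 := by
      rw [pairing_add_right, huF _ (hbF i).2, x.2.2, add_zero]
    have hcar : b i + x ∈ P.carrier := by
      rw [← b.sum_repr (b i + x)]
      refine (convex_convexHull ℝ _).sum_mem (fun j _ => ?_) ?_
        fun j _ => P.verts_subset (hbF j).1
      · rw [← b.coord_apply, hcoord]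
        by_cases hj : j = i
        · rw [hj, if_pos rfl]
          linarith
        · rw [if_neg (Ne.symm hj), zero_add]
          exact hnonneg j hj
      · rw [← hone, hsum]
        rfl
    have hvert : b i + x ∈ P.verts := by
      refine (hterm _ hcar ((hrefl.1 _ (hbF i).1).add (hrefl.1 _ x.2.1))).resolve_left fun h => ?_
      rw [h] at hone
      simp [pairing] at hone
    have hvF : b i + x ∈ P.vertsOn F := ⟨hvert, hu2 _ hcar hone⟩
    rw [← hb] at hvF
    obtain ⟨j, hj⟩ := hvF
    have h1 := hcoord i
    rw [← hj, hcb, if_pos rfl] at h1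
    split_ifs at h1
    · linarith
    · have h2 : b.coord i x = -1 := by linarith
      rw [h2] at hxi
      linarith
  rw [← hb]
  refine isLatticeBasis_of_coord_int b (fun i => hrefl.1 _ (hbF i).1) fun i x hx => ?_
  obtain ⟨z, hz⟩ := hint' i x hx
  obtain ⟨z', hz'⟩ := P.uF_int hrefl hsimp hF huF hx
  refine ⟨z' - z, ?_⟩
  rw [Int.cast_sub, ← hz, ← hz', hu', ht1]
  ring
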